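/- arXiv:1703.07258 — 3 statements merged into one kernel-verified Lean document; each statement's English description precedes it below -/
import Mathlib

section
/- For all real parameters M > 0 and l > 0, the function F(r) = 1 - 2M/r + r²/l² has exactly one zero in (0,∞), and this zero equals p₊ + p₋, where p± = (M l² ± (M² l⁴ + l⁶/27)^{1/2})^{1/3}. -/
noncomputable section

/-- The metric coefficient `F(r) = 1 - 2M/r + r²/l²`. -/
def Fsads (M l r : ℝ) : ℝ := 1 - 2*M/r + r^2/l^2

/-- Real (sign-preserving) cube root. -/
def cbrt (x : ℝ) : ℝ := if 0 ≤ x then x ^ ((1:ℝ)/3) else -((-x) ^ ((1:ℝ)/3))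

/-- `p₊ + p₋` with `p± = (M l² ± (M² l⁴ + l⁶/27)^{1/2})^{1/3}`. -/
def rSAdS (M l : ℝ) : ℝ :=
  cbrt (M*l^2 + Real.sqrt (M^2*l^4 + l^6/27)) + cbrt (M*l^2 - Real.sqrt (M^2*l^4 + l^6/27))

/-!
For `r > 0` the equation `F(r) = 0` is the depressed cubic `r³ + l² r = 2 M l²`. Its left side is
strictly increasing in `r` and vanishes at `0`, so the cubic has a single real root, which is
positive because `2 M l² > 0`. Cardano's formula identifies this root as `p₊ + p₋`: one has
`p₊³ + p₋³ = 2 M l²` and `p₊ p₋ = -l² / 3`.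
-/

section Cbrt

theorem cbrt_pow_three (x : ℝ) : cbrt x ^ 3 = x := by
  have rpow_third_pow_three {y : ℝ} (hy : 0 ≤ y) : (y ^ ((1 : ℝ) / 3)) ^ 3 = y := by
    simpa only [one_div, Nat.cast_ofNat] using Real.rpow_inv_natCast_pow hy three_ne_zero
  unfold cbrt
  split_ifs with hx
  · exact rpow_third_pow_three hx
  · rw [Odd.neg_pow (by decide), rpow_third_pow_three (neg_nonneg.2 (not_le.1 hx).le), neg_neg]

theorem cbrt_eq_iff {x y : ℝ} : cbrt x = y ↔ x = y ^ 3 := by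
  have cube_injective : Function.Injective fun z : ℝ => z ^ 3 :=
    (Odd.strictMono_pow (by decide)).injective
  rw [← cube_injective.eq_iff, cbrt_pow_three]

theorem cbrt_mul (x y : ℝ) : cbrt (x * y) = cbrt x * cbrt y := by
  rw [cbrt_eq_iff, mul_pow, cbrt_pow_three, cbrt_pow_three]

end Cbrt

section DepressedCubic

theorem add_pow_three_add_mul_eq {R : Type*} [CommRing R] {a b p c : R}
    (hcubes : a ^ 3 + b ^ 3 = c) (hprod : 3 * (a * b) = -p) :
    (a + b) ^ 3 + p * (a + b) = c := by
  linear_combination hcubes + (a + b) * hprod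

theorem cardano_depressed_cubic {p q s : ℝ} (hs : s ^ 2 = q ^ 2 + p ^ 3 / 27) :
    (cbrt (q + s) + cbrt (q - s)) ^ 3 + p * (cbrt (q + s) + cbrt (q - s)) = 2 * q := by
  have hcubes : cbrt (q + s) ^ 3 + cbrt (q - s) ^ 3 = 2 * q := by
    rw [cbrt_pow_three, cbrt_pow_three]
    ring
  have hprod : cbrt (q + s) * cbrt (q - s) = -p / 3 := by
    rw [← cbrt_mul, cbrt_eq_iff]
    linear_combination -hs
  exact add_pow_three_add_mul_eq hcubes (by rw [hprod]; ring)

theorem strictMono_pow_three_add_mul {R : Type*} [CommRing R] [LinearOrder R]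
    [IsStrictOrderedRing R] {p : R} (hp : 0 ≤ p) : StrictMono fun r : R => r ^ 3 + p * r :=
  (Odd.strictMono_pow (by decide)).add_monotone (monotone_mul_left_of_nonneg hp)

end DepressedCubic

section Horizon

variable {M l r : ℝ}

theorem Fsads_eq_zero_iff_horizon_cubic (hl : l ≠ 0) (hr : r ≠ 0) :
    Fsads M l r = 0 ↔ r ^ 3 + l ^ 2 * r = 2 * (M * l ^ 2) := by
  have hF : Fsads M l r = (r ^ 3 + l ^ 2 * r - 2 * (M * l ^ 2)) / (r * l ^ 2) := by
    unfold Fsads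
    field_simp
    ring
  have hden : r * l ^ 2 ≠ 0 := mul_ne_zero hr (pow_ne_zero 2 hl)
  rw [hF, div_eq_zero_iff, or_iff_left hden, sub_eq_zero]

theorem rSAdS_horizon_cubic (M l : ℝ) :
    rSAdS M l ^ 3 + l ^ 2 * rSAdS M l = 2 * (M * l ^ 2) := by
  refine cardano_depressed_cubic ?_
  rw [Real.sq_sqrt (by positivity)]
  ring

theorem horizon_cubic_iff_eq_rSAdS : r ^ 3 + l ^ 2 * r = 2 * (M * l ^ 2) ↔ r = rSAdS M l := by
  rw [← rSAdS_horizon_cubic M l]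
  exact (strictMono_pow_three_add_mul (sq_nonneg l)).injective.eq_iff

theorem Fsads_eq_zero_iff_eq_rSAdS (hl : l ≠ 0) (hr : r ≠ 0) :
    Fsads M l r = 0 ↔ r = rSAdS M l :=
  (Fsads_eq_zero_iff_horizon_cubic hl hr).trans horizon_cubic_iff_eq_rSAdS

theorem rSAdS_pos (hM : 0 < M) (hl : l ≠ 0) : 0 < rSAdS M l := by
  refine (strictMono_pow_three_add_mul (sq_nonneg l)).lt_iff_lt.1 ?_
  calc (0 : ℝ) ^ 3 + l ^ 2 * 0 = 0 := by ring
    _ < 2 * (M * l ^ 2) := by positivity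
    _ = rSAdS M l ^ 3 + l ^ 2 * rSAdS M l := (rSAdS_horizon_cubic M l).symm

end Horizon

/-- For all `M > 0`, `l > 0`, the function `F` has exactly one zero in `(0,∞)`,
and this zero equals `p₊ + p₋`. -/
theorem stmt0 (M l : ℝ) (hM : 0 < M) (hl : 0 < l) :
    (∃! r : ℝ, 0 < r ∧ Fsads M l r = 0) ∧
    (0 < rSAdS M l ∧ Fsads M l (rSAdS M l) = 0) := by
  have hpos : 0 < rSAdS M l := rSAdS_pos hM hl.ne'
  have hzero : Fsads M l (rSAdS M l) = 0 := (Fsads_eq_zero_iff_eq_rSAdS hl.ne' hpos.ne').2 rfl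
  refine ⟨⟨rSAdS M l, ⟨hpos, hzero⟩, ?_⟩, hpos, hzero⟩
  rintro r ⟨hr, hFr⟩
  exact (Fsads_eq_zero_iff_eq_rSAdS hl.ne' hr.ne').1 hFr
end
end

section
/- The function s ↦ 1/F(s) is integrable on (r₀,∞) for every r₀ > r_SAdS, and the Regge–Wheeler coordinate x(r) = -∫_r^∞ F(s)^{-1} ds is a strictly increasing differentiable bijection from (r_SAdS,∞) onto (-∞,0) with derivative x'(r) = 1/F(r); moreover x(r) → -∞ as r → r_SAdS⁺ and x(r) → 0 as r → ∞. -/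
open MeasureTheory Filter

noncomputable section

/-- The Regge–Wheeler coordinate `x(r) = -∫_r^∞ F(s)⁻¹ ds`. -/
def xcoord (M l r : ℝ) : ℝ := -∫ s in Set.Ioi r, (Fsads M l s)⁻¹

/-!
`F` is strictly increasing on `(0, ∞)`, so it is positive beyond its zero `r_SAdS`. At infinity
`F` grows like `s² / l²`, which makes `1 / F` integrable there. At `r_SAdS` it is differentiable, so
`F(s) = O(s - r_SAdS)`, and `1 / F` fails to be integrable there because `1 / (s - r_SAdS)` does.
-/

section Inverse

open scoped Topology

lemma not_integrableAtFilter_sub_inv_nhdsGT (a : ℝ) :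
    ¬ IntegrableAtFilter (fun s => (s - a)⁻¹) (𝓝[>] a) := by
  rintro ⟨t, ht, hint⟩
  obtain ⟨b, hab, hbt⟩ := mem_nhdsGT_iff_exists_Ioc_subset.1 ht
  have hab : a < b := hab
  have hab_int : IntervalIntegrable (fun s => (s - a)⁻¹) volume a b :=
    (intervalIntegrable_iff_integrableOn_Ioc_of_le hab.le).2 (hint.mono_set hbt)
  rcases intervalIntegrable_sub_inv_iff.1 hab_int with h | h
  · exact hab.ne h
  · exact h Set.left_mem_uIcc

variable {F : ℝ → ℝ} {a : ℝ}

lemma not_integrableAtFilter_inv_nhdsGT (hF : DifferentiableWithinAt ℝ F (Set.Ioi a) a)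
    (ha : F a = 0) (hne : ∀ᶠ s in 𝓝[>] a, F s ≠ 0) :
    ¬ IntegrableAtFilter (fun s => (F s)⁻¹) (𝓝[>] a) := by
  intro hint
  have hO : F =O[𝓝[>] a] fun s => s - a := by simpa only [ha, sub_zero] using hF.isBigO_sub
  have hO_inv : (fun s => (s - a)⁻¹) =O[𝓝[>] a] fun s => (F s)⁻¹ :=
    hO.inv_rev (hne.mono fun s hs h => absurd h hs)
  have hmeas : StronglyMeasurableAtFilter (fun s : ℝ => (s - a)⁻¹) (𝓝[>] a) :=
    Measurable.stronglyMeasurable (by fun_prop) |>.stronglyMeasurableAtFilter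
  exact not_integrableAtFilter_sub_inv_nhdsGT a (hO_inv.integrableAtFilter hmeas hint)

lemma integrableOn_Ioi_inv_of_rpow_isBigO {p : ℝ} (hp : 1 < p)
    (hcont : ContinuousOn F (Set.Ici a)) (hne : ∀ s ∈ Set.Ici a, F s ≠ 0)
    (hO : (fun s => s ^ p) =O[atTop] F) :
    IntegrableOn (fun s => (F s)⁻¹) (Set.Ioi a) := by
  have hO_inv : (fun s => (F s)⁻¹) =O[atTop] fun s => (s ^ p)⁻¹ := by
    refine hO.inv_rev ?_
    filter_upwards [eventually_gt_atTop 0] with s hs h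
    exact absurd h (Real.rpow_pos_of_pos hs p).ne'
  have hint : IntegrableAtFilter (fun s : ℝ => (s ^ p)⁻¹) atTop := by
    refine ⟨Set.Ioi 1, Ioi_mem_atTop 1, ?_⟩
    refine (integrableOn_Ioi_rpow_of_lt (neg_lt_neg hp) one_pos).congr_fun ?_ measurableSet_Ioi
    exact fun s hs => Real.rpow_neg (zero_le_one.trans (Set.mem_Ioi.1 hs).le) p
  have hloc : LocallyIntegrableOn (fun s => (F s)⁻¹) (Set.Ici a) :=
    (hcont.inv₀ hne).locallyIntegrableOn measurableSet_Ici
  exact (hloc.integrableOn_of_isBigO_atTop hO_inv hint).mono_set Set.Ioi_subset_Ici_self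

end Inverse

section TailIntegral

open scoped Topology

lemma hasDerivAt_integral_Ioi {E : Type*} [NormedAddCommGroup E] [NormedSpace ℝ E]
    [CompleteSpace E] {f : ℝ → E} {a r : ℝ} (hf : IntegrableOn f (Set.Ioi a)) (har : a < r)
    (hcont : ContinuousAt f r) :
    HasDerivAt (fun u => ∫ s in Set.Ioi u, f s) (-f r) r := by
  have hmeas : StronglyMeasurableAtFilter f (𝓝 r) :=
    ⟨Set.Ioi a, Ioi_mem_nhds har, hf.aestronglyMeasurable⟩
  have hderiv : HasDerivAt (fun u => (∫ s in Set.Ioi r, f s) - ∫ s in r..u, f s) (-f r) r :=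
    (intervalIntegral.integral_hasDerivAt_right IntervalIntegrable.refl hmeas hcont).const_sub _
  refine hderiv.congr_of_eventuallyEq ?_
  filter_upwards [Ioi_mem_nhds har] with u hu
  rw [← intervalIntegral.integral_interval_add_Ioi (hf.mono_set (Set.Ioi_subset_Ioi har.le))
    (hf.mono_set (Set.Ioi_subset_Ioi (Set.mem_Ioi.1 hu).le)), add_sub_cancel_left]

variable {f : ℝ → ℝ} {a : ℝ}

lemma strictAntiOn_integral_Ioi (hf : ∀ r > a, IntegrableOn f (Set.Ioi r))
    (hpos : ∀ s > a, 0 < f s) :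
    StrictAntiOn (fun r => ∫ s in Set.Ioi r, f s) (Set.Ioi a) := by
  intro r hr r' _ hrr'
  have hint : IntervalIntegrable f volume r r' :=
    (intervalIntegrable_iff_integrableOn_Ioc_of_le hrr'.le).2
      ((hf r hr).mono_set Set.Ioc_subset_Ioi_self)
  rw [← sub_pos, intervalIntegral.integral_Ioi_sub_Ioi (hf r hr) hrr'.le]
  exact intervalIntegral.intervalIntegral_pos_of_pos_on hint
    (fun s hs => hpos s (lt_trans hr hs.1)) hrr'

lemma tendsto_integral_Ioi_nhdsGT_atTop {μ : Measure ℝ}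
    (hf : ∀ r > a, IntegrableOn f (Set.Ioi r) μ) (hnonneg : ∀ s > a, 0 ≤ f s)
    (hdiv : ¬ IntegrableOn f (Set.Ioi a) μ) :
    Tendsto (fun r => ∫ s in Set.Ioi r, f s ∂μ) (𝓝[>] a) atTop := by
  have hanti : AntitoneOn (fun r => ∫ s in Set.Ioi r, f s ∂μ) (Set.Ioi a) :=
    fun r hr r' _ hrr' => setIntegral_mono_set (hf r hr)
      (ae_restrict_of_forall_mem measurableSet_Ioi fun s hs => hnonneg s (lt_trans hr hs))
      (Set.Ioi_subset_Ioi hrr').eventuallyLE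
  contrapose! hdiv with hnot
  obtain ⟨B, hB⟩ : ∃ B, ∀ r > a, ∫ s in Set.Ioi r, f s ∂μ ≤ B := by
    contrapose! hnot with hunbdd
    refine tendsto_atTop.2 fun B => ?_
    obtain ⟨r, hr, hBr⟩ := hunbdd B
    filter_upwards [Ioc_mem_nhdsGT hr] with u hu
    exact hBr.le.trans (hanti hu.1 hr hu.2)
  obtain ⟨u, -, hu, hu_lim⟩ := exists_seq_strictAnti_tendsto a
  refine (aecover_Ioi_of_Ioi hu_lim).integrable_of_integral_bounded_of_nonneg_ae B
    (fun n => (hf _ (hu n)).mono_measure Measure.restrict_le_self)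
    (ae_restrict_of_forall_mem measurableSet_Ioi hnonneg)
    (Eventually.of_forall fun n => ?_)
  rw [Measure.restrict_restrict_of_subset (Set.Ioi_subset_Ioi (hu n).le)]
  exact hB _ (hu n)

end TailIntegral

open scoped Topology in
lemma bijOn_Ioi_Iio_of_strictMonoOn {α β : Type*} [ConditionallyCompleteLinearOrder α]
    [TopologicalSpace α] [OrderTopology α] [DenselyOrdered α] [NoMaxOrder α] [LinearOrder β]
    [TopologicalSpace β] [OrderClosedTopology β] {f : α → β} {a : α} {b : β}
    (hmono : StrictMonoOn f (Set.Ioi a)) (hcont : ContinuousOn f (Set.Ioi a))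
    (hbot : Tendsto f (𝓝[>] a) atBot) (htop : Tendsto f atTop (𝓝 b)) :
    Set.BijOn f (Set.Ioi a) (Set.Iio b) := by
  have : Nonempty α := ⟨a⟩
  refine ⟨fun r hr => ?_, hmono.injOn, ?_⟩
  · obtain ⟨r', hrr'⟩ := exists_gt r
    have hr' : a < r' := lt_trans hr hrr'
    refine (hmono hr hr' hrr').trans_le (ge_of_tendsto htop ?_)
    filter_upwards [eventually_ge_atTop r'] with u hu
    exact hmono.monotoneOn hr' (hr'.trans_le hu) hu
  · exact isPreconnected_Ioi.intermediate_value_Iio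
      (l₁ := 𝓝[>] a) (l₂ := atTop) inf_le_right
      (le_principal_iff.2 (Ioi_mem_atTop a)) hcont hbot htop

section Fsads

variable {M l rS r : ℝ}

lemma strictMonoOn_Fsads (hM : 0 < M) : StrictMonoOn (Fsads M l) (Set.Ioi 0) := by
  intro r hr s _ hrs
  have hr : 0 < r := hr
  have hdiv : 2 * M / s < 2 * M / r := by gcongr
  have hsq : r ^ 2 / l ^ 2 ≤ s ^ 2 / l ^ 2 := by gcongr
  unfold Fsads
  linarith

lemma Fsads_pos (hM : 0 < M) (hrS0 : 0 < rS) (hrS : Fsads M l rS = 0) (hr : rS < r) :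
    0 < Fsads M l r :=
  hrS ▸ strictMonoOn_Fsads hM hrS0 (hrS0.trans hr) hr

lemma differentiableAt_Fsads (hr : r ≠ 0) : DifferentiableAt ℝ (Fsads M l) r := by
  unfold Fsads
  fun_prop (disch := assumption)

lemma sq_isBigO_Fsads (hl : l ≠ 0) : (fun s => s ^ 2) =O[atTop] Fsads M l := by
  refine Asymptotics.IsBigO.of_bound (l ^ 2) ?_
  filter_upwards [eventually_gt_atTop 0, eventually_ge_atTop (2 * M)] with s hs hMs
  have hdiv : 2 * M / s ≤ 1 := (div_le_one hs).2 hMs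
  have hF : s ^ 2 / l ^ 2 ≤ Fsads M l s := by
    unfold Fsads
    linarith
  calc ‖s ^ 2‖ = l ^ 2 * (s ^ 2 / l ^ 2) := by
        rw [Real.norm_of_nonneg (sq_nonneg s)]
        field_simp
    _ ≤ l ^ 2 * ‖Fsads M l s‖ := by
        gcongr
        exact hF.trans (Real.le_norm_self _)

lemma integrableOn_inv_Fsads (hM : 0 < M) (hl : l ≠ 0) (hrS0 : 0 < rS) (hrS : Fsads M l rS = 0)
    (hr : rS < r) : IntegrableOn (fun s => (Fsads M l s)⁻¹) (Set.Ioi r) := by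
  refine integrableOn_Ioi_inv_of_rpow_isBigO one_lt_two (fun s hs => ?_) (fun s hs => ?_) ?_
  · have hs0 : 0 < s := hrS0.trans (hr.trans_le hs)
    exact (differentiableAt_Fsads hs0.ne').continuousAt.continuousWithinAt
  · exact (Fsads_pos hM hrS0 hrS (hr.trans_le hs)).ne'
  · simpa only [Real.rpow_two] using sq_isBigO_Fsads hl

lemma not_integrableOn_inv_Fsads (hM : 0 < M) (hrS0 : 0 < rS) (hrS : Fsads M l rS = 0) :
    ¬ IntegrableOn (fun s => (Fsads M l s)⁻¹) (Set.Ioi rS) := fun hint =>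
  not_integrableAtFilter_inv_nhdsGT (differentiableAt_Fsads hrS0.ne').differentiableWithinAt hrS
    (eventually_nhdsWithin_of_forall fun _ hs => (Fsads_pos hM hrS0 hrS hs).ne')
    ⟨_, self_mem_nhdsWithin, hint⟩

lemma hasDerivAt_xcoord (hM : 0 < M) (hl : l ≠ 0) (hrS0 : 0 < rS) (hrS : Fsads M l rS = 0)
    (hr : rS < r) : HasDerivAt (xcoord M l) (Fsads M l r)⁻¹ r := by
  obtain ⟨a, hrSa, har⟩ := exists_between hr
  have hcont : ContinuousAt (fun s => (Fsads M l s)⁻¹) r :=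
    (differentiableAt_Fsads (hrS0.trans hr).ne').continuousAt.inv₀ (Fsads_pos hM hrS0 hrS hr).ne'
  have hint := integrableOn_inv_Fsads hM hl hrS0 hrS hrSa
  rw [← neg_neg (Fsads M l r)⁻¹]
  exact (hasDerivAt_integral_Ioi hint har hcont).neg

end Fsads

/-- `s ↦ 1/F(s)` is integrable on `(r₀,∞)` for every `r₀ > r_SAdS`, and the
Regge–Wheeler coordinate `x(r) = -∫_r^∞ F(s)⁻¹ ds` is a strictly increasing
differentiable bijection from `(r_SAdS,∞)` onto `(-∞,0)` with derivative
`x'(r) = 1/F(r)`; moreover `x(r) → -∞` as `r → r_SAdS⁺` and `x(r) → 0` as `r → ∞`. -/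
theorem stmt2 (M l rS : ℝ) (hM : 0 < M) (hl : 0 < l)
    (hrS0 : 0 < rS) (hrS : Fsads M l rS = 0) :
    (∀ r₀ : ℝ, rS < r₀ → IntegrableOn (fun s => (Fsads M l s)⁻¹) (Set.Ioi r₀)) ∧
    StrictMonoOn (xcoord M l) (Set.Ioi rS) ∧
    (∀ r ∈ Set.Ioi rS, HasDerivAt (xcoord M l) (Fsads M l r)⁻¹ r) ∧
    Set.BijOn (xcoord M l) (Set.Ioi rS) (Set.Iio 0) ∧
    Tendsto (xcoord M l) (nhdsWithin rS (Set.Ioi rS)) atBot ∧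
    Tendsto (xcoord M l) atTop (nhds 0) := by
  have hint : ∀ r₀ > rS, IntegrableOn (fun s => (Fsads M l s)⁻¹) (Set.Ioi r₀) := fun _ hr₀ =>
    integrableOn_inv_Fsads hM hl.ne' hrS0 hrS hr₀
  have hpos : ∀ s > rS, 0 < (Fsads M l s)⁻¹ := fun _ hs => inv_pos.2 (Fsads_pos hM hrS0 hrS hs)
  have hmono : StrictMonoOn (xcoord M l) (Set.Ioi rS) := (strictAntiOn_integral_Ioi hint hpos).neg
  have hderiv : ∀ r ∈ Set.Ioi rS, HasDerivAt (xcoord M l) (Fsads M l r)⁻¹ r := fun _ hr =>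
    hasDerivAt_xcoord hM hl.ne' hrS0 hrS hr
  have hcont : ContinuousOn (xcoord M l) (Set.Ioi rS) := HasDerivAt.continuousOn hderiv
  have hbot : Tendsto (xcoord M l) (nhdsWithin rS (Set.Ioi rS)) atBot :=
    tendsto_neg_atTop_atBot.comp (tendsto_integral_Ioi_nhdsGT_atTop hint
      (fun s hs => (hpos s hs).le) (not_integrableOn_inv_Fsads hM hrS0 hrS))
  have htop : Tendsto (xcoord M l) atTop (nhds 0) := by
    rw [← neg_zero]
    exact (tendsto_integral_Ioi_zero tendsto_id).neg
  exact ⟨hint, hmono, hderiv, bijOn_Ioi_Iio_of_strictMonoOn hmono hcont hbot htop, hbot, htop⟩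
end
end

section
/- With κ = F'(r_SAdS)/2 > 0, there exist positive constants C_A and C_B such that e^{-κx} A(x) → C_A and e^{-κx} B(x) → C_B as x → -∞; in particular A(x) = C_A e^{κx} + o(e^{κx}) and B(x) = C_B e^{κx} + o(e^{κx}) as x → -∞. -/
/-!
Write `a` for the horizon radius. There `F(r) ≈ 2κ(r - a)`, and `1/F(r) - 1/(2κ(r - a))` extends
continuously to `r = a`; integrating it, the Regge–Wheeler coordinate satisfies
`x(r) - log(r - a)/(2κ) → c` as `r ↓ a`. Therefore
`e^{-κx} √F = e^{-κ(x - log(r - a)/(2κ))} √(F(r)/(r - a)) → e^{-κc} √(2κ)`.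
-/

open MeasureTheory Filter Asymptotics

noncomputable section

/-- The potential `A(x) = F(r(x))^{1/2}/r(x)`. -/
def Asads (M l : ℝ) (rx : ℝ → ℝ) (x : ℝ) : ℝ := Real.sqrt (Fsads M l (rx x)) / rx x

/-- The potential `B(x) = F(r(x))^{1/2}`. -/
def Bsads (M l : ℝ) (rx : ℝ → ℝ) (x : ℝ) : ℝ := Real.sqrt (Fsads M l (rx x))

/-- The surface gravity `κ = F'(r_SAdS)/2`. -/
def kappa (M l rS : ℝ) : ℝ := deriv (Fsads M l) rS / 2

section

open Set Topology

lemma tendsto_nhdsGT_of_monotoneOn_of_rightInverse {α β : Type*} [LinearOrder α]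
    [TopologicalSpace α] [OrderTopology α] [Preorder β] [NoMinOrder β] {a : α} {f : α → β}
    {g : β → α} (hf : MonotoneOn f (Ioi a)) (hg : ∀ᶠ y in atBot, a < g y ∧ f (g y) = y) :
    Tendsto g atBot (𝓝[>] a) := by
  refine tendsto_nhdsWithin_iff.2 ⟨tendsto_order.2 ⟨fun b hb => ?_, fun b hb => ?_⟩,
    hg.mono fun _ hy => hy.1⟩
  · exact hg.mono fun _ hy => hb.trans hy.1
  · filter_upwards [hg, eventually_lt_atBot (f b)] with y hy hyb
    by_contra! hle
    exact (hf hb hy.1 hle).not_gt (hy.2.trans_lt hyb)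

lemma integral_inv_const_mul_sub {a b r : ℝ} (k : ℝ) (hr : a < r) (hb : a < b) :
    ∫ s in r..b, (k * (s - a))⁻¹ = (Real.log (b - a) - Real.log (r - a)) / k := by
  have hr' : 0 < r - a := sub_pos.2 hr
  have hb' : 0 < b - a := sub_pos.2 hb
  simp only [mul_inv]
  rw [intervalIntegral.integral_const_mul,
    intervalIntegral.integral_comp_sub_right (fun s => s⁻¹), integral_inv_of_pos hr' hb',
    Real.log_div hb'.ne' hr'.ne', inv_mul_eq_div]

lemma isLittleO_sub_const_mul_exp_iff {α : Type*} {L : Filter α} {f u : α → ℝ} {C : ℝ} :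
    (fun x => f x - C * Real.exp (u x)) =o[L] (fun x => Real.exp (u x)) ↔
      Tendsto (fun x => Real.exp (-u x) * f x) L (𝓝 C) := by
  rw [isLittleO_iff_tendsto fun x hx => absurd hx (Real.exp_ne_zero _),
    ← tendsto_sub_nhds_zero_iff (x := C)]
  refine tendsto_congr fun x => ?_
  rw [Real.exp_neg]
  field_simp

end

section NondegenerateHorizon

open Set Topology

variable {F : ℝ → ℝ} {a b κ : ℝ}

/-- The Regge–Wheeler coordinate `r ↦ -∫_r^∞ F(s)⁻¹ ds` of a metric coefficient `F`, normalised to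
vanish at infinity. For `F = Fsads M l` it unfolds to `xcoord M l`. It takes the junk value `0`
where `F⁻¹` is not integrable on `(r, ∞)`. -/
def reggeWheeler (F : ℝ → ℝ) (r : ℝ) : ℝ := -∫ s in Ioi r, (F s)⁻¹

lemma monotoneOn_reggeWheeler (hF : ∀ r > a, 0 ≤ F r)
    (hint : ∀ r > a, IntegrableOn (fun s => (F s)⁻¹) (Ioi r)) :
    MonotoneOn (reggeWheeler F) (Ioi a) := by
  intro r hr t _ hrt
  refine neg_le_neg (setIntegral_mono_set (hint r hr) ?_ (Ioi_subset_Ioi hrt).eventuallyLE)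
  exact ae_restrict_of_forall_mem measurableSet_Ioi
    fun s hs => inv_nonneg.2 (hF s (lt_trans hr hs))

lemma reggeWheeler_sub_log {r k : ℝ} (hr : a < r) (hb : a < b)
    (hint : ∀ r > a, IntegrableOn (fun s => (F s)⁻¹) (Ioi r)) :
    reggeWheeler F r - Real.log (r - a) / k =
      reggeWheeler F b - Real.log (b - a) / k - ∫ s in r..b, ((F s)⁻¹ - (k * (s - a))⁻¹) := by
  have hInv : IntervalIntegrable (fun s => (F s)⁻¹) volume r b :=
    intervalIntegrable_iff.2 ((hint (min r b) (lt_min hr hb)).mono_set Ioc_subset_Ioi_self)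
  have hSing : IntervalIntegrable (fun s => (k * (s - a))⁻¹) volume r b := by
    simp only [mul_inv]
    refine (intervalIntegrable_sub_inv_iff.2 (.inr ?_)).const_mul _
    exact notMem_uIcc_of_lt hr hb
  have hsplit := intervalIntegral.integral_Ioi_sub_Ioi' (hint r hr) (hint b hb)
  rw [intervalIntegral.integral_sub hInv hSing, integral_inv_const_mul_sub k hr hb, ← hsplit,
    reggeWheeler, reggeWheeler]
  ring

lemma exists_tendsto_reggeWheeler_sub_log {k : ℝ} (hab : a < b)
    (hint : ∀ r > a, IntegrableOn (fun s => (F s)⁻¹) (Ioi r))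
    (hreg : IntervalIntegrable (fun s => (F s)⁻¹ - (k * (s - a))⁻¹) volume a b) :
    ∃ c, Tendsto (fun r => reggeWheeler F r - Real.log (r - a) / k) (𝓝[>] a) (𝓝 c) := by
  have hprim := intervalIntegral.continuousOn_primitive_interval_left
    ((intervalIntegrable_iff' (by simp)).1 hreg) a left_mem_uIcc
  rw [uIcc_of_le hab.le] at hprim
  have hlim := (hprim.mono_left (nhdsWithin_le_of_mem (Icc_mem_nhdsGT hab))).const_sub
    (reggeWheeler F b - Real.log (b - a) / k)
  refine ⟨_, hlim.congr' ?_⟩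
  filter_upwards [self_mem_nhdsWithin] with r hr
  exact (reggeWheeler_sub_log hr hab hint).symm

lemma exp_neg_mul_mul_sqrt_eq {T r : ℝ} (hκ : κ ≠ 0) (hr : a < r) (hFa : F a = 0) :
    Real.exp (-(κ * T)) * √(F r) =
      Real.exp (-(κ * (T - Real.log (r - a) / (2 * κ)))) * √(slope F a r) := by
  have hra : 0 < r - a := sub_pos.2 hr
  have hexponent : -(κ * (T - Real.log (r - a) / (2 * κ))) =
      -(κ * T) + Real.log (r - a) / 2 := by
    field_simp
    ring
  have hF : F r = (r - a) * slope F a r := by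
    rw [slope_def_field, hFa, sub_zero, mul_div_cancel₀ _ hra.ne']
  rw [hexponent, Real.exp_add, Real.exp_half, Real.exp_log hra, mul_assoc, ← Real.sqrt_mul hra.le,
    ← hF]

lemma tendsto_exp_neg_mul_mul_sqrt {T : ℝ → ℝ} {c : ℝ} (hκ : κ ≠ 0) (hFa : F a = 0)
    (hF : HasDerivWithinAt F (2 * κ) (Ioi a) a)
    (hT : Tendsto (fun r => T r - Real.log (r - a) / (2 * κ)) (𝓝[>] a) (𝓝 c)) :
    Tendsto (fun r => Real.exp (-(κ * T r)) * √(F r)) (𝓝[>] a)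
      (𝓝 (Real.exp (-(κ * c)) * √(2 * κ))) := by
  have hslope := (hasDerivWithinAt_iff_tendsto_slope' self_notMem_Ioi).1 hF
  refine ((hT.const_mul κ).neg.rexp.mul hslope.sqrt).congr' ?_
  filter_upwards [self_mem_nhdsWithin] with r hr
  exact (exp_neg_mul_mul_sqrt_eq hκ hr hFa).symm

theorem exists_tendsto_exp_neg_mul_mul_sqrt_comp {ρ : ℝ → ℝ} (hκ : 0 < κ) (hab : a < b)
    (hFa : F a = 0) (hF : HasDerivWithinAt F (2 * κ) (Ioi a) a)
    (hint : ∀ r > a, IntegrableOn (fun s => (F s)⁻¹) (Ioi r))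
    (hreg : IntervalIntegrable (fun s => (F s)⁻¹ - (2 * κ * (s - a))⁻¹) volume a b)
    (hρ : Tendsto ρ atBot (𝓝[>] a)) (hinv : ∀ᶠ x in atBot, reggeWheeler F (ρ x) = x) :
    ∃ C > 0, Tendsto (fun x => Real.exp (-(κ * x)) * √(F (ρ x))) atBot (𝓝 C) := by
  obtain ⟨c, hc⟩ := exists_tendsto_reggeWheeler_sub_log hab hint hreg
  refine ⟨Real.exp (-(κ * c)) * √(2 * κ), by positivity,
    ((tendsto_exp_neg_mul_mul_sqrt hκ.ne' hFa hF hc).comp hρ).congr' ?_⟩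
  filter_upwards [hinv] with x hx
  simp only [Function.comp_apply, hx]

end NondegenerateHorizon

section SchwarzschildAdS

open Set Topology

variable {M l a r : ℝ}

lemma Fsads_eq_of_root (hl : l ≠ 0) (ha : a ≠ 0) (hroot : Fsads M l a = 0) (hr : r ≠ 0) :
    Fsads M l r = (r - a) * (r ^ 2 + a * r + a ^ 2 + l ^ 2) / (l ^ 2 * r) := by
  unfold Fsads at *
  field_simp at hroot ⊢
  linear_combination hroot

lemma Fsads_pos_of_root_lt (hl : l ≠ 0) (ha : 0 < a) (hroot : Fsads M l a = 0) (hr : a < r) :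
    0 < Fsads M l r := by
  have hr0 : 0 < r := ha.trans hr
  have : 0 < r - a := sub_pos.2 hr
  rw [Fsads_eq_of_root hl ha.ne' hroot hr0.ne']
  positivity

lemma hasDerivAt_Fsads (M l : ℝ) (hr : r ≠ 0) :
    HasDerivAt (Fsads M l) (2 * M / r ^ 2 + 2 * r / l ^ 2) r := by
  have hM := (hasDerivAt_inv hr).const_mul (2 * M)
  have hl := (hasDerivAt_pow 2 r).div_const (l ^ 2)
  refine ((hM.const_sub 1).add hl).congr_deriv ?_
  push_cast
  ring

lemma hasDerivAt_Fsads_two_mul_kappa (M l : ℝ) (hr : r ≠ 0) :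
    HasDerivAt (Fsads M l) (2 * kappa M l r) r := by
  rw [kappa, mul_div_cancel₀ _ two_ne_zero]
  exact (hasDerivAt_Fsads M l hr).differentiableAt.hasDerivAt

lemma two_mul_kappa_of_root (hl : l ≠ 0) (ha : a ≠ 0) (hroot : Fsads M l a = 0) :
    2 * kappa M l a = (3 * a ^ 2 + l ^ 2) / (l ^ 2 * a) := by
  rw [kappa, (hasDerivAt_Fsads M l ha).deriv]
  unfold Fsads at hroot
  field_simp at hroot ⊢
  linear_combination -hroot

lemma kappa_pos_of_root (hl : l ≠ 0) (ha : 0 < a) (hroot : Fsads M l a = 0) :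
    0 < kappa M l a := by
  have h : 0 < 2 * kappa M l a := by
    rw [two_mul_kappa_of_root hl ha.ne' hroot]
    positivity
  exact pos_of_mul_pos_right h two_pos.le

lemma inv_Fsads_le (hl : l ≠ 0) (ha : 0 < a) (hroot : Fsads M l a = 0) {b : ℝ} (hb : a < b)
    (hr : b < r) : (Fsads M l r)⁻¹ ≤ l ^ 2 * b / (b - a) * r ^ (-2 : ℝ) := by
  have hb0 : 0 < b := ha.trans hb
  have hr0 : 0 < r := hb0.trans hr
  have : 0 < b - a := sub_pos.2 hb
  have hsub : (b - a) * r ≤ b * (r - a) := by nlinarith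
  have hquad : r ^ 2 ≤ r ^ 2 + a * r + a ^ 2 + l ^ 2 := by
    nlinarith [mul_pos ha hr0, sq_nonneg a, sq_nonneg l]
  have hprod : (b - a) * r * r ^ 2 ≤ b * (r - a) * (r ^ 2 + a * r + a ^ 2 + l ^ 2) :=
    mul_le_mul hsub hquad (sq_nonneg r) (mul_nonneg hb0.le (by linarith))
  have hF : (b - a) * r ^ 2 / (l ^ 2 * b) ≤ Fsads M l r := by
    rw [Fsads_eq_of_root hl ha.ne' hroot hr0.ne', div_le_div_iff₀ (by positivity) (by positivity)]
    nlinarith [mul_le_mul_of_nonneg_left hprod (sq_nonneg l)]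
  refine (inv_anti₀ (by positivity) hF).trans_eq ?_
  rw [Real.rpow_neg hr0.le, Real.rpow_two, inv_div, ← div_eq_mul_inv, div_div]

lemma integrableOn_inv_Fsads_s4 (hl : l ≠ 0) (ha : 0 < a) (hroot : Fsads M l a = 0) {b : ℝ}
    (hb : a < b) : IntegrableOn (fun s => (Fsads M l s)⁻¹) (Ioi b) := by
  have hmeas : Measurable fun s => (Fsads M l s)⁻¹ := by
    unfold Fsads
    fun_prop
  refine Integrable.mono'
    ((integrableOn_Ioi_rpow_of_lt (by norm_num : (-2 : ℝ) < -1) (ha.trans hb)).const_mul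
      (l ^ 2 * b / (b - a))) hmeas.aestronglyMeasurable
    (ae_restrict_of_forall_mem measurableSet_Ioi fun s hs => ?_)
  rw [Real.norm_of_nonneg (inv_pos.2 (Fsads_pos_of_root_lt hl ha hroot (hb.trans hs))).le]
  exact inv_Fsads_le hl ha hroot hb hs

lemma inv_Fsads_sub_inv (hl : l ≠ 0) (ha : 0 < a) (hroot : Fsads M l a = 0) (hr : a < r) :
    (Fsads M l r)⁻¹ - (2 * kappa M l a * (r - a))⁻¹ =
      l ^ 2 * (a ^ 2 + l ^ 2 - a * r) /
        ((r ^ 2 + a * r + a ^ 2 + l ^ 2) * (3 * a ^ 2 + l ^ 2)) := by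
  have hr0 : 0 < r := ha.trans hr
  have hra : r - a ≠ 0 := (sub_pos.2 hr).ne'
  have : r ^ 2 + a * r + a ^ 2 + l ^ 2 ≠ 0 := by positivity
  rw [Fsads_eq_of_root hl ha.ne' hroot hr0.ne', two_mul_kappa_of_root hl ha.ne' hroot]
  field_simp
  ring

lemma intervalIntegrable_inv_Fsads_sub_inv (hl : l ≠ 0) (ha : 0 < a) (hroot : Fsads M l a = 0)
    {b : ℝ} (hb : a < b) :
    IntervalIntegrable (fun s => (Fsads M l s)⁻¹ - (2 * kappa M l a * (s - a))⁻¹) volume a b := by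
  have hcont : ContinuousOn (fun s => l ^ 2 * (a ^ 2 + l ^ 2 - a * s) /
      ((s ^ 2 + a * s + a ^ 2 + l ^ 2) * (3 * a ^ 2 + l ^ 2))) (uIcc a b) := by
    refine ContinuousOn.div (by fun_prop) (by fun_prop) fun s hs => ?_
    rw [uIcc_of_le hb.le] at hs
    have hs0 : 0 < s := ha.trans_le hs.1
    positivity
  refine hcont.intervalIntegrable.congr_uIoo fun s hs => ?_
  rw [uIoo_of_le hb.le] at hs
  exact (inv_Fsads_sub_inv hl ha hroot hs.1).symm

lemma tendsto_nhdsGT_of_xcoord_eq (hl : l ≠ 0) (ha : 0 < a) (hroot : Fsads M l a = 0)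
    {ρ : ℝ → ℝ} (hρ : ∀ᶠ x in atBot, a < ρ x ∧ xcoord M l (ρ x) = x) :
    Tendsto ρ atBot (𝓝[>] a) :=
  tendsto_nhdsGT_of_monotoneOn_of_rightInverse
    (monotoneOn_reggeWheeler (fun _ hr => (Fsads_pos_of_root_lt hl ha hroot hr).le)
      fun _ hr => integrableOn_inv_Fsads_s4 hl ha hroot hr) hρ

theorem exists_tendsto_exp_neg_mul_mul_Bsads (hl : l ≠ 0) (ha : 0 < a) (hroot : Fsads M l a = 0)
    {ρ : ℝ → ℝ} (hρ : ∀ᶠ x in atBot, a < ρ x ∧ xcoord M l (ρ x) = x) :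
    ∃ C > 0, Tendsto (fun x => Real.exp (-(kappa M l a * x)) * Bsads M l ρ x) atBot (𝓝 C) :=
  exists_tendsto_exp_neg_mul_mul_sqrt_comp (kappa_pos_of_root hl ha hroot) (lt_add_one a) hroot
    (hasDerivAt_Fsads_two_mul_kappa M l ha.ne').hasDerivWithinAt
    (fun _ hr => integrableOn_inv_Fsads_s4 hl ha hroot hr)
    (intervalIntegrable_inv_Fsads_sub_inv hl ha hroot (lt_add_one a))
    (tendsto_nhdsGT_of_xcoord_eq hl ha hroot hρ) (hρ.mono fun _ hx => hx.2)

end SchwarzschildAdS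

/-- With `κ = F'(r_SAdS)/2 > 0` there exist positive constants `C_A`, `C_B` with
`e^{-κx}A(x) → C_A` and `e^{-κx}B(x) → C_B` as `x → -∞`; in particular
`A(x) = C_A e^{κx} + o(e^{κx})` and `B(x) = C_B e^{κx} + o(e^{κx})` as `x → -∞`. -/
theorem stmt4 (M l rS : ℝ) (rx : ℝ → ℝ) (hM : 0 < M) (hl : 0 < l)
    (hrS0 : 0 < rS) (hrS : Fsads M l rS = 0)
    (hrx : ∀ x < (0:ℝ), rS < rx x ∧ xcoord M l (rx x) = x) :
    0 < kappa M l rS ∧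
    ∃ CA > (0:ℝ), ∃ CB > (0:ℝ),
      Tendsto (fun x => Real.exp (-(kappa M l rS) * x) * Asads M l rx x) atBot (nhds CA) ∧
      Tendsto (fun x => Real.exp (-(kappa M l rS) * x) * Bsads M l rx x) atBot (nhds CB) ∧
      (fun x => Asads M l rx x - CA * Real.exp (kappa M l rS * x))
        =o[atBot] (fun x => Real.exp (kappa M l rS * x)) ∧
      (fun x => Bsads M l rx x - CB * Real.exp (kappa M l rS * x))
        =o[atBot] (fun x => Real.exp (kappa M l rS * x)) := by
  have hl0 : l ≠ 0 := hl.ne'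
  have hinv : ∀ᶠ x in atBot, rS < rx x ∧ xcoord M l (rx x) = x :=
    (eventually_lt_atBot 0).mono hrx
  obtain ⟨CB, hCB, hB⟩ := exists_tendsto_exp_neg_mul_mul_Bsads hl0 hrS0 hrS hinv
  have hrx_lim : Tendsto rx atBot (nhds rS) :=
    (tendsto_nhdsGT_of_xcoord_eq hl0 hrS0 hrS hinv).mono_right nhdsWithin_le_nhds
  have hA : Tendsto (fun x => Real.exp (-(kappa M l rS * x)) * Asads M l rx x) atBot
      (nhds (CB / rS)) :=
    (hB.div hrx_lim hrS0.ne').congr fun x => mul_div_assoc _ _ _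
  simp only [neg_mul]
  exact ⟨kappa_pos_of_root hl0 hrS0 hrS, CB / rS, div_pos hCB hrS0, CB, hCB, hA, hB,
    isLittleO_sub_const_mul_exp_iff.2 hA, isLittleO_sub_const_mul_exp_iff.2 hB⟩
end
end
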